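/- (Lemma J.1, instance where Almost Tracking outperforms Successive Rejects.) There exist a constant C > 0 and an integer K₀ ≥ 3 such that for every K ≥ K₀ the following holds. Let m = ⌊log K⌋ and define P ∈ ℝ^K by P_1 = 2, P_i = 1 for 2 ≤ i ≤ m, and P_i = 0 for m < i ≤ K. Then for every Q ∈ ℝ^K such that index 1 is not a maximizer of Q: S(Q,P)/Z(Q) ≥ C / log(log K). -/

import Mathlib

/-!
Write `w i = 1 / D i`, `M = max Q`, `m = ⌊log K⌋`. Two estimates on the weights drive the proof.
First, `1 / D i ≤ 2 / rank i`, where `rank i` counts the entries of `Q` that are at least `Q i`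
(`rank_le_Dfun`); so any set of `n` indices has total weight at most `2 (1 + log n)`
(`sum_inv_Dfun_le`). Second, `D i ≤ 4 K` for every `i` (`Dfun_le`). Moreover `H₁(P) ≥ K / 8`.

If `M ≤ 1/2`, each of the first `m` arms is displaced by at least `1/2`, so `S` is at least a
constant times `m`, whereas `Z` is at most a constant times `1 + log K`, which is of order `m`;
the ratio is bounded below by a constant.

If `M > 1/2`, arm `0` or a maximizer of `Q` is displaced by at least `1/2`, so `S` is bounded below
by a constant. In `Z` the first `m` arms contribute `O(1 + log m) = O(log log K)`. The other arms
with `|Q i| ≥ 1/4` contribute at most `16 ∑ (Q i - P i)² / D i`, hence `O(S)`. The remaining arms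
have gaps within a factor `3` of each other, so if there are `n` of them each has `D i ≥ n / 8` and
together they contribute at most `8`. Hence `Z` is at most a constant times `S log log K`.
-/

open Finset

/-- The largest entry of `Q` (the index set `Fin K` is nonempty in all statements below). -/
noncomputable def Qmax {K : ℕ} (Q : Fin K → ℝ) : ℝ := ⨆ j, Q j

/-- Index `i` is a maximizer of the vector `Q`. -/
def isMax {K : ℕ} (Q : Fin K → ℝ) (i : Fin K) : Prop := ∀ j, Q j ≤ Q i

/-- Index `i` is the unique maximizer of the vector `P`. -/
def uniqueMax {K : ℕ} (P : Fin K → ℝ) (i : Fin K) : Prop :=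
  isMax P i ∧ ∀ j, isMax P j → j = i

/-- The gap `Δ_i^Q = Q* - Q_i`. -/
noncomputable def gapQ {K : ℕ} (Q : Fin K → ℝ) (i : Fin K) : ℝ := Qmax Q - Q i

/-- `D_i(Q)` for a non-maximizing index `i`:
`(2Δ_i^Q)² · Σ_{j≠i} (Δ_j^Q + Δ_i^Q)⁻²`. -/
noncomputable def Dbase {K : ℕ} (Q : Fin K → ℝ) (i : Fin K) : ℝ :=
  (2 * gapQ Q i) ^ 2 * ∑ j ∈ univ.erase i, ((gapQ Q j + gapQ Q i) ^ 2)⁻¹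

open Classical in
/-- `D_i(Q)`: for a maximizer `i` it is the minimum of `D_{i'}(Q)` over non-maximizers `i'`. -/
noncomputable def Dfun {K : ℕ} (Q : Fin K → ℝ) (i : Fin K) : ℝ :=
  if isMax Q i then sInf {x : ℝ | ∃ i', ¬ isMax Q i' ∧ x = Dbase Q i'} else Dbase Q i

/-- The normalization factor `Z(Q) = Σ_i 1/D_i(Q)`. -/
noncomputable def Zfun {K : ℕ} (Q : Fin K → ℝ) : ℝ := ∑ i, (Dfun Q i)⁻¹

open Classical in
/-- The complexity `H₁(P) = Σ_{i ≠ i*(P)} ((max_j P_j) - P_i)⁻²`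
(for `P` with a unique maximizer, the non-maximizing indices are exactly those `≠ i*(P)`). -/
noncomputable def H1 {K : ℕ} (P : Fin K → ℝ) : ℝ :=
  ∑ i ∈ univ.filter (fun i => ¬ isMax P i), ((Qmax P - P i) ^ 2)⁻¹

/-- The stability functional `S(Q,P) = H₁(P) · Σ_i (Q_i - P_i)² / D_i(Q)`. -/
noncomputable def Sfun {K : ℕ} (Q P : Fin K → ℝ) : ℝ :=
  H1 P * ∑ i, (Q i - P i) ^ 2 / Dfun Q i

section Basic

/-! ### Gaps -/

variable {K : ℕ} (Q : Fin K → ℝ)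

lemma le_Qmax (i : Fin K) : Q i ≤ Qmax Q :=
  le_ciSup (f := Q) (Set.finite_range Q).bddAbove i

lemma gapQ_nonneg (i : Fin K) : 0 ≤ gapQ Q i := sub_nonneg.2 (le_Qmax Q i)

lemma Qmax_eq_of_isMax {Q : Fin K → ℝ} {i : Fin K} (h : isMax Q i) : Qmax Q = Q i := by
  have : Nonempty (Fin K) := ⟨i⟩
  exact le_antisymm (ciSup_le h) (le_Qmax Q i)

lemma exists_isMax (i : Fin K) : ∃ j, isMax Q j := by
  have : Nonempty (Fin K) := ⟨i⟩
  exact Finite.exists_max Q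

lemma gapQ_pos {Q : Fin K → ℝ} {i : Fin K} (h : ¬ isMax Q i) : 0 < gapQ Q i := by
  refine lt_of_le_of_ne (gapQ_nonneg Q i) fun h0 => h fun j => ?_
  have := le_Qmax Q j
  unfold gapQ at h0
  linarith

/-! ### Bounds on a single `D i` -/

lemma Dbase_eq (i : Fin K) :
    Dbase Q i = ∑ j ∈ univ.erase i, (2 * gapQ Q i) ^ 2 * ((gapQ Q j + gapQ Q i) ^ 2)⁻¹ := by
  rw [Dbase, mul_sum]

lemma Dterm_nonneg (i j : Fin K) :
    0 ≤ (2 * gapQ Q i) ^ 2 * ((gapQ Q j + gapQ Q i) ^ 2)⁻¹ := by positivity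

lemma Dbase_le {Q : Fin K → ℝ} {i : Fin K} (h : ¬ isMax Q i) : Dbase Q i ≤ 4 * K := by
  rw [Dbase_eq]
  have hi := gapQ_pos h
  calc _ ≤ ∑ j ∈ univ.erase i, (4 : ℝ) := by
        refine sum_le_sum fun j _ => ?_
        have hj := gapQ_nonneg Q j
        rw [← div_eq_mul_inv, div_le_iff₀ (by positivity)]
        nlinarith
    _ ≤ ∑ j : Fin K, (4 : ℝ) :=
        sum_le_sum_of_subset_of_nonneg (erase_subset _ _) (by intros; norm_num)
    _ = 4 * K := by simp [mul_comm]

/-- A lower bound for `D i` from a set of indices whose summands are all at least `c`. -/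
lemma card_mul_le_Dbase (i : Fin K) (s : Finset (Fin K)) (c : ℝ)
    (h : ∀ j ∈ s, c ≤ (2 * gapQ Q i) ^ 2 * ((gapQ Q j + gapQ Q i) ^ 2)⁻¹) (hi : i ∉ s) :
    s.card * c ≤ Dbase Q i := by
  rw [Dbase_eq]
  calc (s.card : ℝ) * c = ∑ j ∈ s, c := by simp
    _ ≤ _ := sum_le_sum h
    _ ≤ _ := sum_le_sum_of_subset_of_nonneg
        (fun j hj => mem_erase.2 ⟨ne_of_mem_of_not_mem hj hi, mem_univ _⟩)
        (fun j _ _ => Dterm_nonneg Q i j)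

open Classical in
/-- A maximizer `j` has gap `0`, so its summand in `D i` is exactly `4`. -/
lemma four_mul_card_le_Dbase {Q : Fin K → ℝ} {i : Fin K} (h : ¬ isMax Q i) :
    4 * ((univ.filter (isMax Q)).card : ℝ) ≤ Dbase Q i := by
  rw [mul_comm]
  refine card_mul_le_Dbase Q i _ 4 (fun j hj => ?_) (by simpa using h)
  have hj0 : gapQ Q j = 0 := by
    rw [gapQ, Qmax_eq_of_isMax (mem_filter.1 hj).2, sub_self]
  have hi := gapQ_pos h
  rw [hj0, zero_add, ← div_eq_mul_inv, le_div_iff₀ (by positivity)]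
  nlinarith

lemma four_le_Dbase {Q : Fin K → ℝ} {i : Fin K} (h : ¬ isMax Q i) : 4 ≤ Dbase Q i := by
  classical
  obtain ⟨j, hj⟩ := exists_isMax Q i
  have h1 : 1 ≤ (univ.filter (isMax Q)).card := card_pos.2 ⟨j, by simpa using hj⟩
  have h2 : (1 : ℝ) ≤ ((univ.filter (isMax Q)).card : ℝ) := by exact_mod_cast h1
  have := four_mul_card_le_Dbase h
  linarith

lemma Dfun_of_not {Q : Fin K → ℝ} {i : Fin K} (h : ¬ isMax Q i) : Dfun Q i = Dbase Q i := by
  simp [Dfun, h]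

lemma Dfun_le {Q : Fin K → ℝ} {i₀ : Fin K} (h₀ : ¬ isMax Q i₀) (i : Fin K) :
    Dfun Q i ≤ 4 * K := by
  by_cases h : isMax Q i
  · simp only [Dfun, h, if_true]
    refine le_trans (csInf_le ⟨4, ?_⟩ ⟨i₀, h₀, rfl⟩) (Dbase_le h₀)
    rintro x ⟨i', hi', rfl⟩
    exact four_le_Dbase hi'
  · rw [Dfun_of_not h]
    exact Dbase_le h

/-- `D i` dominates half the rank of `i`, the number of entries of `Q` that are at least `Q i`.
The index `i₀` guarantees that the minimum defining `D` at a maximizer is over a nonempty set. -/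
lemma rank_le_Dfun {Q : Fin K → ℝ} {i₀ : Fin K} (h₀ : ¬ isMax Q i₀) (i : Fin K) :
    ((univ.filter fun j => Q i ≤ Q j).card : ℝ) / 2 ≤ Dfun Q i := by
  classical
  by_cases h : isMax Q i
  · have hs : (univ.filter fun j => Q i ≤ Q j) = univ.filter (isMax Q) := by
      ext j
      simp only [mem_filter, mem_univ, true_and]
      exact ⟨fun hj k => (h k).trans hj, fun hj => hj i⟩
    -- With `r` maximizers the rank of `i` is `r`, while every non-maximizer has `D ≥ 4 r`.
    rw [hs]
    simp only [Dfun, h, if_true]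
    refine le_csInf ⟨Dbase Q i₀, i₀, h₀, rfl⟩ ?_
    rintro x ⟨i', hi', rfl⟩
    have h1 := four_mul_card_le_Dbase hi'
    have h2 : (0 : ℝ) ≤ ((univ.filter (isMax Q)).card : ℝ) := by positivity
    linarith
  · rw [Dfun_of_not h]
    have h4 := four_le_Dbase h
    have hi := gapQ_pos h
    have hmem : i ∈ univ.filter fun j => Q i ≤ Q j := by simp
    have h1 := card_mul_le_Dbase Q i ((univ.filter fun j => Q i ≤ Q j).erase i) 1
      (fun j hj => by
        have hj' : Q i ≤ Q j := by simpa using (mem_erase.1 hj).2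
        have hj0 := gapQ_nonneg Q j
        have hji : gapQ Q j ≤ gapQ Q i := by unfold gapQ; linarith
        rw [← div_eq_mul_inv, le_div_iff₀ (by positivity)]
        nlinarith) (by simp)
    have h2 := card_erase_add_one hmem
    have h3 : ((univ.filter fun j => Q i ≤ Q j).card : ℝ)
        = ((univ.filter fun j => Q i ≤ Q j).erase i).card + 1 := by exact_mod_cast h2.symm
    rw [h3]
    linarith

lemma Dfun_pos {Q : Fin K → ℝ} {i₀ : Fin K} (h₀ : ¬ isMax Q i₀) (i : Fin K) :
    0 < Dfun Q i := by
  refine lt_of_lt_of_le ?_ (rank_le_Dfun h₀ i)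
  have : 0 < (univ.filter fun j => Q i ≤ Q j).card := card_pos.2 ⟨i, by simp⟩
  positivity

/-! ### Sums of weights -/

/-- The reciprocal ranks over a finite set sum to at most a harmonic number (ties only lower the
sum). Ranks are taken within the set, and the induction inserts a new smallest entry. -/
lemma sum_inv_rank_le (s : Finset (Fin K)) :
    ∑ i ∈ s, (((s.filter fun j => Q i ≤ Q j).card : ℝ))⁻¹ ≤ harmonic s.card := by
  induction s using Finset.induction_on_min_value Q with
  | empty => simp
  | insert a s ha hmin ih =>
    rw [sum_insert ha, card_insert_of_notMem ha, harmonic_succ]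
    have h1 : ((insert a s).filter fun j => Q a ≤ Q j) = insert a s := by
      refine filter_true_of_mem fun j hj => ?_
      rcases mem_insert.1 hj with rfl | hj
      · exact le_rfl
      · exact hmin j hj
    rw [h1, card_insert_of_notMem ha]
    have h2 : ∑ i ∈ s, ((((insert a s).filter fun j => Q i ≤ Q j).card : ℝ))⁻¹
        ≤ ∑ i ∈ s, (((s.filter fun j => Q i ≤ Q j).card : ℝ))⁻¹ := by
      refine sum_le_sum fun i hi => ?_
      have h3 : 0 < (s.filter fun j => Q i ≤ Q j).card := card_pos.2 ⟨i, by simp [hi]⟩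
      gcongr
      exact subset_insert _ _
    push_cast
    linarith

lemma sum_inv_Dfun_le {Q : Fin K → ℝ} {i₀ : Fin K} (h₀ : ¬ isMax Q i₀) (s : Finset (Fin K)) :
    ∑ i ∈ s, (Dfun Q i)⁻¹ ≤ 2 * (1 + Real.log s.card) := by
  calc ∑ i ∈ s, (Dfun Q i)⁻¹
      ≤ ∑ i ∈ s, 2 * (((s.filter fun j => Q i ≤ Q j).card : ℝ))⁻¹ := by
        refine sum_le_sum fun i hi => ?_
        have h1 : 0 < (s.filter fun j => Q i ≤ Q j).card := card_pos.2 ⟨i, by simp [hi]⟩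
        have h2 : (s.filter fun j => Q i ≤ Q j).card ≤ (univ.filter fun j => Q i ≤ Q j).card :=
          card_le_card (filter_subset_filter _ (subset_univ _))
        have h2' : ((s.filter fun j => Q i ≤ Q j).card : ℝ)
          ≤ (univ.filter fun j => Q i ≤ Q j).card := by exact_mod_cast h2
        have h1' : (0 : ℝ) < (s.filter fun j => Q i ≤ Q j).card := by exact_mod_cast h1
        have h3 := rank_le_Dfun h₀ i
        have h4 : ((s.filter fun j => Q i ≤ Q j).card : ℝ) / 2 ≤ Dfun Q i := by linarith
        calc (Dfun Q i)⁻¹ ≤ (((s.filter fun j => Q i ≤ Q j).card : ℝ) / 2)⁻¹ := by gcongr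
          _ = _ := by rw [inv_div, div_eq_mul_inv]
    _ = 2 * ∑ i ∈ s, (((s.filter fun j => Q i ≤ Q j).card : ℝ))⁻¹ := by rw [mul_sum]
    _ ≤ 2 * (1 + Real.log s.card) := by
        have := (sum_inv_rank_le Q s).trans (harmonic_le_one_add_log s.card)
        linarith

/-- Indices whose entries lie within `1/4` of `0`, when the maximum exceeds `1/2`, have gaps within
a factor `3` of each other, so together they carry bounded weight. -/
lemma sum_inv_Dfun_near {Q : Fin K → ℝ} (hM : 1 / 2 < Qmax Q) (s : Finset (Fin K))
    (hs : ∀ i ∈ s, |Q i| < 1 / 4) : ∑ i ∈ s, (Dfun Q i)⁻¹ ≤ 8 := by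
  rcases s.eq_empty_or_nonempty with rfl | hne
  · simp
  have hc : (0 : ℝ) < s.card := by exact_mod_cast hne.card_pos
  have hD : ∀ i ∈ s, (s.card : ℝ) / 8 ≤ Dfun Q i := by
    intro i hi
    have hnm : ¬ isMax Q i := fun h => by
      have h1 := Qmax_eq_of_isMax h
      have h2 := (abs_lt.1 (hs i hi)).2
      linarith
    rw [Dfun_of_not hnm]
    have h4 := four_le_Dbase hnm
    have hp := gapQ_pos hnm
    have h1 := card_mul_le_Dbase Q i (s.erase i) (1 / 4) (fun j hj => by
      have hj0 := gapQ_nonneg Q j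
      have hj3 : gapQ Q j ≤ 3 * gapQ Q i := by
        have h1 := abs_lt.1 (hs i hi)
        have h2 := abs_lt.1 (hs j (mem_erase.1 hj).2)
        unfold gapQ
        linarith
      rw [← div_eq_mul_inv, le_div_iff₀ (by positivity)]
      nlinarith) (by simp)
    have h2 := card_erase_add_one hi
    have h3 : (s.card : ℝ) = (s.erase i).card + 1 := by exact_mod_cast h2.symm
    have h5 : (0 : ℝ) ≤ ((s.erase i).card : ℝ) := by positivity
    linarith
  calc ∑ i ∈ s, (Dfun Q i)⁻¹ ≤ ∑ i ∈ s, ((s.card : ℝ) / 8)⁻¹ := by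
        refine sum_le_sum fun i hi => ?_
        have := hD i hi
        gcongr
    _ = 8 := by
        rw [sum_const, nsmul_eq_mul]
        field_simp

end Basic

/-! ### Comparing `S` with `Z` -/

/-- Lemma J.1 (instance where Almost Tracking outperforms Successive Rejects).
Indices are 0-based: Lean index `0` is the paper's arm `1`; with `m = ⌊log K⌋`,
the paper's arms `2,…,m` (value 1) are the Lean indices `1,…,m-1`.  The condition
"index 1 is not a maximizer of Q" is phrased via `i.val = 0`. -/
theorem instance_tracking_beats_SR :
    ∃ C : ℝ, 0 < C ∧
      ∃ K0 : ℕ, 3 ≤ K0 ∧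
        ∀ (K : ℕ) (hK : K0 ≤ K) (P : Fin K → ℝ),
          (∀ i : Fin K,
              P i = if i.val = 0 then 2
                    else if i.val < ⌊Real.log K⌋₊ then 1 else 0) →
          ∀ Q : Fin K → ℝ,
            (∀ i : Fin K, i.val = 0 → ¬ isMax Q i) →
            C / Real.log (Real.log K) ≤ Sfun Q P / Zfun Q := by
  refine ⟨1 / 2000, by norm_num, 100, by norm_num, ?_⟩
  intro K hK P hP Q hQ
  have hKr : (100 : ℝ) ≤ K := by exact_mod_cast hK
  have he := Real.exp_one_lt_d9
  -- `K₀ = 100` exceeds `e⁴`, which makes `log K ≥ 4 > e` and `log log K ≥ 1`.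
  have hlog4 : 4 ≤ Real.log K := by
    rw [Real.le_log_iff_exp_le (by linarith)]
    have h1 : Real.exp 4 = Real.exp 1 ^ 4 := by rw [← Real.exp_nat_mul]; norm_num
    have h2 : Real.exp 1 ^ 4 ≤ 2.72 ^ 4 := by
      gcongr
      linarith
    rw [h1]
    norm_num at h2
    linarith
  have hL : 1 ≤ Real.log (Real.log K) := by
    rw [Real.le_log_iff_exp_le (by linarith)]
    linarith
  set L := Real.log (Real.log K) with hLdef
  set m := ⌊Real.log K⌋₊ with hm
  have hm_le : (m : ℝ) ≤ Real.log K := Nat.floor_le (by linarith)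
  have hm_lt : Real.log K < m + 1 := Nat.lt_floor_add_one _
  have hm3 : (3 : ℝ) ≤ m := by linarith
  have hm0 : 0 < m := by
    have : (0 : ℝ) < m := by linarith
    exact_mod_cast this
  have hmK : m ≤ K := by
    have h1 : (m : ℝ) ≤ K := hm_le.trans (Real.log_le_self (by linarith))
    exact_mod_cast h1
  have hKpos : 0 < K := by omega
  let z : Fin K := ⟨0, hKpos⟩
  have hz : ¬ isMax Q z := hQ z rfl
  have hPz : P z = 2 := by rw [hP]; simp [z]
  have hP1 : ∀ i : Fin K, i ≠ z → P i ≤ 1 := by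
    intro i hi
    have : i.val ≠ 0 := fun h => hi (Fin.ext h)
    rw [hP, if_neg this]
    split_ifs <;> norm_num
  have hP0 : ∀ i : Fin K, 0 ≤ P i := by
    intro i
    rw [hP]
    split_ifs <;> norm_num
  have hPmax : isMax P z := by
    intro j
    by_cases h : j = z
    · rw [h]
    · have := hP1 j h
      linarith
  have hH : (K : ℝ) / 8 ≤ H1 P := by
    have hsum : H1 P = ∑ i ∈ univ.erase z, ((Qmax P - P i) ^ 2)⁻¹ := by
      refine sum_congr ?_ fun _ _ => rfl
      ext i
      simp only [mem_filter, mem_univ, true_and, mem_erase, and_true]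
      refine ⟨fun h e => h (e ▸ hPmax), fun h hi => ?_⟩
      have h1 := hi z
      have h2 := hP1 i h
      linarith
    have h1 : ∑ i ∈ univ.erase z, (1 / 4 : ℝ) ≤ H1 P := by
      rw [hsum]
      refine sum_le_sum fun i hi => ?_
      rw [Qmax_eq_of_isMax hPmax, hPz, ← one_div]
      have h2 := hP1 i (mem_erase.1 hi).1
      have h3 := hP0 i
      have h4 : 0 < (2 - P i) ^ 2 := by nlinarith
      rw [div_le_div_iff₀ (by norm_num) h4]
      nlinarith
    rw [sum_const, card_erase_of_mem (mem_univ _), card_univ, Fintype.card_fin,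
      nsmul_eq_mul, Nat.cast_sub (by omega)] at h1
    push_cast at h1
    linarith
  have hH0 : 0 ≤ H1 P := by linarith
  have hDpos := Dfun_pos hz
  set T := ∑ i, (Q i - P i) ^ 2 / Dfun Q i with hT
  have hTterm : ∀ i ∈ (univ : Finset (Fin K)), 0 ≤ (Q i - P i) ^ 2 / Dfun Q i :=
    fun i _ => div_nonneg (sq_nonneg _) (hDpos i).le
  have hdisp : ∀ i, 1 / 4 ≤ (Q i - P i) ^ 2 → 1 / (16 * K) ≤ (Q i - P i) ^ 2 / Dfun Q i := by
    intro i hi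
    rw [div_le_div_iff₀ (by linarith) (hDpos i)]
    have := Dfun_le hz i
    nlinarith
  have hS : Sfun Q P = H1 P * T := rfl
  have hZpos : 0 < Zfun Q :=
    sum_pos (fun i _ => inv_pos.2 (hDpos i)) ⟨z, mem_univ _⟩
  have hcard : (univ.filter fun i : Fin K => i.val < m).card = m := by
    rw [Fin.card_filter_val_lt, min_eq_right hmK]
  -- It suffices to bound `Z` by `2000 L S`.
  rw [div_le_div_iff₀ (by linarith) hZpos]
  suffices h : Zfun Q ≤ 2000 * (Sfun Q P * L) by linarith
  rcases le_or_gt (Qmax Q) (1 / 2) with hM | hM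
  · have hTm : m * (1 / (16 * K)) ≤ T := by
      calc (m : ℝ) * (1 / (16 * K))
          = ∑ i ∈ univ.filter (fun i : Fin K => i.val < m), (1 / (16 * (K : ℝ))) := by
            rw [sum_const, hcard, nsmul_eq_mul]
        _ ≤ ∑ i ∈ univ.filter (fun i : Fin K => i.val < m), (Q i - P i) ^ 2 / Dfun Q i := by
            refine sum_le_sum fun i hi => hdisp i ?_
            have hi' : i.val < m := (mem_filter.1 hi).2
            have h1 : 1 ≤ P i := by
              rw [hP, if_pos hi']
              split_ifs <;> norm_num
            have h2 := le_Qmax Q i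
            nlinarith
        _ ≤ T := sum_le_sum_of_subset_of_nonneg (filter_subset _ _) fun i hi _ => hTterm i hi
    have hSm : m / 128 ≤ Sfun Q P := by
      rw [hS]
      calc (m : ℝ) / 128 = K / 8 * (m * (1 / (16 * K))) := by
            field_simp
            norm_num
        _ ≤ H1 P * T := by gcongr
    have hZ := sum_inv_Dfun_le hz univ
    rw [card_univ, Fintype.card_fin] at hZ
    have hZ' : Zfun Q ≤ 2 * (1 + Real.log K) := hZ
    nlinarith
  · have hT1 : 1 / (16 * K) ≤ T := by
      have key : ∃ i, 1 / 4 ≤ (Q i - P i) ^ 2 := by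
        obtain ⟨j, hj⟩ := exists_isMax Q z
        have hjz : j ≠ z := fun e => hz (e ▸ hj)
        have h1 := hP1 j hjz
        have h2 := hj z
        by_cases h : Q z ≤ 3 / 2
        · exact ⟨z, by rw [hPz]; nlinarith⟩
        · exact ⟨j, by nlinarith⟩
      obtain ⟨i, hi⟩ := key
      exact (hdisp i hi).trans (single_le_sum hTterm (mem_univ i))
    have hS1 : 1 / 128 ≤ Sfun Q P := by
      rw [hS]
      calc (1 : ℝ) / 128 = K / 8 * (1 / (16 * K)) := by
            field_simp
            norm_num
        _ ≤ H1 P * T := by gcongr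
    have hT0 : 0 ≤ T := sum_nonneg hTterm
    have hTS : T ≤ Sfun Q P := by
      rw [hS]
      nlinarith
    have hA := sum_inv_Dfun_le hz (univ.filter fun i : Fin K => i.val < m)
    rw [hcard] at hA
    have hmL : Real.log m ≤ L := Real.log_le_log (by linarith) hm_le
    have hB := sum_inv_Dfun_near hM
      ((univ.filter fun i : Fin K => ¬ i.val < m).filter fun i => |Q i| < 1 / 4)
      (fun i hi => (mem_filter.1 hi).2)
    have hC : ∑ i ∈ (univ.filter fun i : Fin K => ¬ i.val < m).filter (fun i => ¬ |Q i| < 1 / 4),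
        (Dfun Q i)⁻¹ ≤ 16 * T := by
      rw [hT, mul_sum]
      refine (sum_le_sum fun i hi => ?_).trans
        (sum_le_sum_of_subset_of_nonneg (subset_univ _)
          fun i hi _ => mul_nonneg (by norm_num) (hTterm i hi))
      simp only [mem_filter, mem_univ, true_and, not_lt] at hi
      have hPi : P i = 0 := by
        rw [hP, if_neg (by omega), if_neg (by omega)]
      rw [hPi, sub_zero, div_eq_mul_inv, ← mul_assoc]
      have h1 : 1 ≤ 16 * Q i ^ 2 := by
        rw [← sq_abs]
        nlinarith
      exact le_mul_of_one_le_left (inv_nonneg.2 (hDpos i).le) h1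
    have hsplit : Zfun Q = _ := (sum_filter_add_sum_filter_not univ
      (fun i : Fin K => i.val < m) fun i => (Dfun Q i)⁻¹).symm
    rw [← sum_filter_add_sum_filter_not (univ.filter fun i : Fin K => ¬ i.val < m)
      (fun i => |Q i| < 1 / 4)] at hsplit
    have hZ : Zfun Q ≤ 12 * L + 16 * Sfun Q P := by linarith
    nlinarith
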